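/- Define the ℂ-linear functional μ on Q by μ(E^m F^n K^l) = (β²/i)·δ_{m,1}·δ_{n,1}·δ_{l,3} on the PBW basis {E^m F^n K^l : m,n ∈ {0,1}, 0 ≤ l ≤ 3}, and the element c = (β²/i)·E·F·(1 + K + K² + K³) ∈ Q. Then: (i) μ is a right integral: (μ⊗id)(Δ(x)) = μ(x)·1 for all x ∈ Q; (ii) c is a two-sided cointegral: x·c = c·x = ε(x)·c for all x ∈ Q; (iii) the normalisations (μ⊗μ)(M) = 1 and μ(c) = 1 hold, where M = R₂₁·R is the monodromy matrix. -/

import Mathlib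

open TensorProduct

set_option maxHeartbeats 1000000
set_option synthInstance.maxHeartbeats 400000

noncomputable section

/-- Generators of the restricted quantum group `Q = \bar U_i sl(2)`. -/
inductive QGen : Type
  | E | F | K | Kinv
deriving DecidableEq

/-- The free algebra on the generators. -/
abbrev FA : Type := FreeAlgebra ℂ QGen

def ιE : FA := FreeAlgebra.ι ℂ QGen.E
def ιF : FA := FreeAlgebra.ι ℂ QGen.F
def ιK : FA := FreeAlgebra.ι ℂ QGen.K
def ιKi : FA := FreeAlgebra.ι ℂ QGen.Kinv

/-- Defining relations of `\bar U_i sl(2)` (at `q = i`, i.e. `p = 2`). -/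
inductive QRel : FA → FA → Prop
  | KKi : QRel (ιK * ιKi) 1
  | KiK : QRel (ιKi * ιK) 1
  | KEKi : QRel (ιK * ιE * ιKi) (-ιE)
  | KFKi : QRel (ιK * ιF * ιKi) (-ιF)
  | EF : QRel (ιE * ιF - ιF * ιE) ((2 * Complex.I)⁻¹ • (ιK - ιKi))
  | Esq : QRel (ιE ^ 2) 0
  | Fsq : QRel (ιF ^ 2) 0
  | K4 : QRel (ιK ^ 4) 1

/-- The restricted quantum group `\bar U_i sl(2)`: the quotient of the free algebra
by the two-sided ideal generated by the defining relations. -/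
abbrev Q : Type := RingQuot QRel

def gE : Q := RingQuot.mkAlgHom ℂ QRel ιE
def gF : Q := RingQuot.mkAlgHom ℂ QRel ιF
def gK : Q := RingQuot.mkAlgHom ℂ QRel ιK
def gKi : Q := RingQuot.mkAlgHom ℂ QRel ιKi

section Gadgets

variable (k : Type) [Field k] (A : Type) [Ring A] [Algebra k A]

abbrev TP2 : Type := A ⊗[k] A
abbrev TP3 : Type := A ⊗[k] (A ⊗[k] A)
abbrev TP4 : Type := A ⊗[k] (A ⊗[k] (A ⊗[k] A))

/-- Multiplication `a ⊗ b ↦ a * b`. -/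
def mulA : TP2 k A →ₗ[k] A := LinearMap.mul' k A

/-- Tensor flip `a ⊗ b ↦ b ⊗ a`. -/
def flipA : TP2 k A →ₗ[k] TP2 k A := (TensorProduct.comm k A A).toLinearMap

/-- `a ↦ a ⊗ 1`. -/
def lTen : A →ₗ[k] TP2 k A := (TensorProduct.mk k A A).flip 1

/-- `a ↦ 1 ⊗ a`. -/
def rTen : A →ₗ[k] TP2 k A := TensorProduct.mk k A A 1

/-- `a ⊗ b ↦ a ⊗ b ⊗ 1`. -/
def emb12 : TP2 k A →ₗ[k] TP3 k A := TensorProduct.map LinearMap.id (lTen k A)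

/-- `a ⊗ b ↦ a ⊗ 1 ⊗ b`. -/
def emb13 : TP2 k A →ₗ[k] TP3 k A := TensorProduct.map LinearMap.id (rTen k A)

/-- `a ⊗ b ↦ 1 ⊗ a ⊗ b`. -/
def emb23 : TP2 k A →ₗ[k] TP3 k A := TensorProduct.mk k A (TP2 k A) 1

/-- `a ⊗ b ⊗ c ↦ a ⊗ c ⊗ b`. -/
def perm132 : TP3 k A →ₗ[k] TP3 k A := TensorProduct.map LinearMap.id (flipA k A)

/-- `a ⊗ b ⊗ c ↦ b ⊗ c ⊗ a`. -/
def perm231 : TP3 k A →ₗ[k] TP3 k A :=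
  (TensorProduct.assoc k A A A).toLinearMap ∘ₗ (TensorProduct.comm k A (TP2 k A)).toLinearMap

/-- `a ⊗ b ⊗ c ↦ c ⊗ a ⊗ b`. -/
def perm312 : TP3 k A →ₗ[k] TP3 k A :=
  (TensorProduct.comm k (TP2 k A) A).toLinearMap ∘ₗ (TensorProduct.assoc k A A A).symm.toLinearMap

/-- `a ⊗ b ⊗ c ↦ b ⊗ a ⊗ c`. -/
def perm213 : TP3 k A →ₗ[k] TP3 k A :=
  (TensorProduct.assoc k A A A).toLinearMap ∘ₗ
    (TensorProduct.map (flipA k A) LinearMap.id) ∘ₗ (TensorProduct.assoc k A A A).symm.toLinearMap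

variable {k A}

/-- `(Δ ⊗ id)` on two tensor factors, landing in the triple tensor product. -/
def copL (D : A →ₐ[k] TP2 k A) : TP2 k A →ₗ[k] TP3 k A :=
  (TensorProduct.assoc k A A A).toLinearMap ∘ₗ TensorProduct.map D.toLinearMap LinearMap.id

/-- `(id ⊗ Δ)` on two tensor factors. -/
def copR (D : A →ₐ[k] TP2 k A) : TP2 k A →ₗ[k] TP3 k A :=
  TensorProduct.map LinearMap.id D.toLinearMap

/-- `(ε ⊗ id) : A ⊗ A → A`. -/
def cuL (ce : A →ₐ[k] k) : TP2 k A →ₗ[k] A :=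
  (TensorProduct.lid k A).toLinearMap ∘ₗ TensorProduct.map ce.toLinearMap LinearMap.id

/-- `(id ⊗ ε) : A ⊗ A → A`. -/
def cuR (ce : A →ₐ[k] k) : TP2 k A →ₗ[k] A :=
  (TensorProduct.rid k A).toLinearMap ∘ₗ TensorProduct.map LinearMap.id ce.toLinearMap

/-- `(id ⊗ ε ⊗ id) : A ⊗ A ⊗ A → A ⊗ A`. -/
def cuMid (ce : A →ₐ[k] k) : TP3 k A →ₗ[k] TP2 k A :=
  TensorProduct.map LinearMap.id (cuL ce)

/-- `(Δ ⊗ id ⊗ id)`. -/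
def cop4_1 (D : A →ₐ[k] TP2 k A) : TP3 k A →ₗ[k] TP4 k A :=
  (TensorProduct.assoc k A A (TP2 k A)).toLinearMap ∘ₗ TensorProduct.map D.toLinearMap LinearMap.id

/-- `(id ⊗ Δ ⊗ id)`. -/
def cop4_2 (D : A →ₐ[k] TP2 k A) : TP3 k A →ₗ[k] TP4 k A :=
  TensorProduct.map LinearMap.id (copL D)

/-- `(id ⊗ id ⊗ Δ)`. -/
def cop4_3 (D : A →ₐ[k] TP2 k A) : TP3 k A →ₗ[k] TP4 k A :=
  TensorProduct.map LinearMap.id (copR D)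

/-- `a ⊗ b ⊗ c ↦ a ⊗ b ⊗ c ⊗ 1`, i.e. `Φ ↦ Φ ⊗ 1`. -/
def pad4 : TP3 k A →ₗ[k] TP4 k A :=
  TensorProduct.map LinearMap.id (TensorProduct.map LinearMap.id (lTen k A))

/-- `a ⊗ b ⊗ c ↦ f(a) * g(b) * h(c)`. -/
def tmap3 (f g h : A →ₗ[k] A) : TP3 k A →ₗ[k] A :=
  mulA k A ∘ₗ TensorProduct.map f (mulA k A ∘ₗ TensorProduct.map g h)

/-- `a ⊗ b ↦ S(a) * b`, used in the antipode axiom `m ∘ (S ⊗ id) ∘ Δ = 1·ε`. -/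
def antipL (s : A →ₗ[k] A) : TP2 k A →ₗ[k] A := mulA k A ∘ₗ TensorProduct.map s LinearMap.id

/-- `a ⊗ b ↦ a * S(b)`. -/
def antipR (s : A →ₗ[k] A) : TP2 k A →ₗ[k] A := mulA k A ∘ₗ TensorProduct.map LinearMap.id s

end Gadgets

/-- Central idempotent `e₀ = (1 + K²)/2`. -/
def e0 : Q := (2:ℂ)⁻¹ • (1 + gK ^ 2)

/-- Central idempotent `e₁ = (1 − K²)/2`. -/
def e1 : Q := (2:ℂ)⁻¹ • (1 - gK ^ 2)

/-- `f⁺ = −i F`. -/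
def fp : Q := (-Complex.I) • gF

/-- `f⁻ = E K⁻¹`. -/
def fm : Q := gE * gKi

/-- The Casimir element `C = FE − (i/4)(K − K⁻¹)`. -/
def Cas : Q := gF * gE - (Complex.I / 4) • (gK - gKi)

def t2 (a b : Q) : TP2 ℂ Q := a ⊗ₜ[ℂ] b

def t3 (a b c : Q) : TP3 ℂ Q := a ⊗ₜ[ℂ] (b ⊗ₜ[ℂ] c)

def eEF : Q := gE * gF
def eEK : Q := gE * gK
def eFK : Q := gF * gK
def eEFK : Q := gE * gF * gK

/-- `Φ^{010}` component of the coassociator. -/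
def Phi010 : TP3 ℂ Q :=
  t3 1 1 1 - (1 + Complex.I) • t3 gE gK gF + (1 - Complex.I) • t3 eFK gK eEK
    + (2:ℂ) • t3 eEFK 1 eEFK

/-- `Φ^{101}` component of the coassociator. -/
def Phi101 : TP3 ℂ Q :=
  (Complex.I - 1) • t3 1 gF eEK + t3 1 gK 1 + (2:ℂ) • t3 1 eEF eEFK
    - (1 + Complex.I) • t3 1 eEK gF - (1 + Complex.I) • t3 gE eFK 1
    + (2 * Complex.I) • t3 gE eEFK gF + (1 - Complex.I) • t3 eFK gE 1
    - (2 * Complex.I) • t3 eFK eEFK eEK - (2:ℂ) • t3 eEFK eEF 1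

/-- `Φ^{111}` component of the coassociator. -/
def Phi111 (β : ℂ) : TP3 ℂ Q :=
  (Complex.I * β ^ 2) • (
    (1 + Complex.I) • t3 1 gF eEK - t3 1 gK 1 - (2:ℂ) • t3 1 eEF 1
      - (2 * Complex.I) • t3 1 eEF eEFK + (1 + Complex.I) • t3 1 eEK gF
      - (1 + Complex.I) • t3 gE 1 gF + (1 + Complex.I) • t3 gE eFK 1
      + (2 * Complex.I) • t3 gE eFK eEFK + (2:ℂ) • t3 gE eEFK gF
      - (1 + Complex.I) • t3 eFK 1 eEK + (1 + Complex.I) • t3 eFK gE 1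
      + (2 * Complex.I) • t3 eFK gE eEFK + (2:ℂ) • t3 eFK eEFK eEK
      + (2 * Complex.I) • t3 eEFK gF eEK + (2 * Complex.I) • t3 eEFK gK eEFK
      - (2 * Complex.I) • t3 eEFK eEF 1 + (2 * Complex.I) • t3 eEFK eEK gF
      + (4:ℂ) • t3 eEFK eEF eEFK)

/-- The coassociator `Φ` of the quasi-Hopf algebra structure on `Q`. -/
def Phi (β : ℂ) : TP3 ℂ Q :=
  t3 e0 e0 e0 + t3 e1 e0 e0 + Phi010 * t3 e0 e1 e0 + t3 e0 e0 e1
    + t3 e1 e1 e0 + Phi101 * t3 e1 e0 e1 + t3 e0 e1 e1 + Phi111 β * t3 e1 e1 e1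

def R00 : TP2 ℂ Q :=
  (2:ℂ)⁻¹ • ((t2 1 1 + t2 1 gK + t2 gK 1 - t2 gK gK) * (t2 1 1 + (2 * Complex.I) • t2 gE gF))

def R01 : TP2 ℂ Q :=
  (2:ℂ)⁻¹ • ((t2 1 1 - Complex.I • t2 1 gK + t2 gK 1 + Complex.I • t2 gK gK) *
    (t2 1 1 + (1 - Complex.I) • t2 eFK eEK - (1 - Complex.I) • t2 gE gF
      + (1 + Complex.I) • t2 eEFK 1 + (2 * Complex.I) • t2 eEFK eEFK))

def R10 : TP2 ℂ Q :=
  (2:ℂ)⁻¹ • ((t2 1 1 + t2 1 gK - Complex.I • t2 gK 1 + Complex.I • t2 gK gK) *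
    (t2 1 gK + (1 - Complex.I) • t2 eFK gE + (1 - Complex.I) • t2 gE eFK
      - (1 - Complex.I) • t2 1 eEF - (2 * Complex.I) • t2 eEFK eEF))

def R11 (β : ℂ) : TP2 ℂ Q :=
  (β / 2) • ((t2 1 1 - Complex.I • t2 1 gK - Complex.I • t2 gK 1 + t2 gK gK) *
    ((-Complex.I) • t2 gK 1 + (2 * Complex.I) • t2 eEK gF + (1 - Complex.I) • t2 gK eEFK
      - (1 + Complex.I) • t2 eEF 1 - (2 * Complex.I) • t2 eEF eEFK))

/-- The universal R-matrix `R` of the quasi-triangular quasi-Hopf structure on `Q`. -/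
def Rmat (β : ℂ) : TP2 ℂ Q :=
  R00 * t2 e0 e0 + R01 * t2 e0 e1 + R10 * t2 e1 e0 + R11 β * t2 e1 e1

/-- The standard R-matrix `R_st` of the quotient `Q/(K²-1)`. -/
def Rst : TP2 ℂ Q :=
  (2:ℂ)⁻¹ • ∑ m ∈ Finset.range 2, ∑ n ∈ Finset.range 2,
    ((-1:ℂ) ^ (m * n)) • (t2 (gK ^ m) (gK ^ n) * (t2 1 1 + (2 * Complex.I) • t2 gE gF))

/-- The monodromy matrix `M = R₂₁ · R`. -/
def Mmat (β : ℂ) : TP2 ℂ Q := flipA ℂ Q (Rmat β) * Rmat β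

/-- The ribbon element `v = (e₀ − iβ K e₁)(1 − 2 f⁺ f⁻)`. -/
def vRib (β : ℂ) : Q := (e0 - (Complex.I * β) • (gK * e1)) * (1 - (2:ℂ) • (fp * fm))

/-- The coevaluation element `β = e₀ − 2iβ² C e₁`. -/
def bbEl (β : ℂ) : Q := e0 - (2 * Complex.I * β ^ 2) • (Cas * e1)

/-- `b ⊗ c ↦ S(b · bb · S(c))`, inner part of the Drinfeld element. -/
def uInner (S : Q →ₗ[ℂ] Q) (bb : Q) : TP2 ℂ Q →ₗ[ℂ] Q :=
  S ∘ₗ mulA ℂ Q ∘ₗ TensorProduct.map (LinearMap.mulRight ℂ bb) S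

/-- `Φ' ⊗ Φ'' ⊗ Φ''' ↦ S(Φ'' · bb · S(Φ''')) ⊗ Φ'`. -/
def uMap1 (S : Q →ₗ[ℂ] Q) (bb : Q) : TP3 ℂ Q →ₗ[ℂ] TP2 ℂ Q :=
  TensorProduct.map (uInner S bb) LinearMap.id ∘ₗ (TensorProduct.comm ℂ Q (TP2 ℂ Q)).toLinearMap

/-- `R' ⊗ R'' ↦ S(R'') · al · R'`. -/
def uMap2 (S : Q →ₗ[ℂ] Q) (al : Q) : TP2 ℂ Q →ₗ[ℂ] Q :=
  mulA ℂ Q ∘ₗ TensorProduct.map (LinearMap.mulRight ℂ al ∘ₗ S) LinearMap.id ∘ₗ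
    (TensorProduct.comm ℂ Q Q).toLinearMap

/-- `(x ⊗ a) ⊗ (R' ⊗ R'') ↦ x · (S(R'') · al · R') · a`. -/
def uBig (S : Q →ₗ[ℂ] Q) (al : Q) : TP2 ℂ Q ⊗[ℂ] TP2 ℂ Q →ₗ[ℂ] Q :=
  mulA ℂ Q ∘ₗ TensorProduct.map LinearMap.id (mulA ℂ Q ∘ₗ (TensorProduct.comm ℂ Q Q).toLinearMap)
    ∘ₗ (TensorProduct.assoc ℂ Q Q Q).toLinearMap ∘ₗ TensorProduct.map LinearMap.id (uMap2 S al)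

/-- The Drinfeld element `u = Σ S(Φ''·b·S(Φ'''))·S(R'')·α·R'·Φ'` (with `α = 1`). -/
def uDrin (β : ℂ) (S : Q →ₗ[ℂ] Q) : Q :=
  uBig S 1 (uMap1 S (bbEl β) (Phi β) ⊗ₜ[ℂ] Rmat β)

/-- The balancing element `g = b · S(α) · v⁻¹ · u` (with `α = 1`). -/
def balG (β : ℂ) (S : Q →ₗ[ℂ] Q) : Q :=
  bbEl β * S 1 * Ring.inverse (vRib β) * uDrin β S

/-- The cointegral `c = (β²/i)·E·F·(1 + K + K² + K³)`. -/
def cInt (β : ℂ) : Q := (β ^ 2 / Complex.I) • (gE * gF * (1 + gK + gK ^ 2 + gK ^ 3))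

/-- The q-trace of a one-dimensional representation, with balancing element `K⁻¹`. -/
def qTr1 (ρ : Q →ₐ[ℂ] ℂ) : Q →ₗ[ℂ] ℂ := ρ.toLinearMap ∘ₗ LinearMap.mulLeft ℂ gK

/-- The q-trace of a two-dimensional (matrix) representation, with balancing element `K⁻¹`. -/
def qTrM (ρ : Q →ₐ[ℂ] Matrix (Fin 2) (Fin 2) ℂ) : Q →ₗ[ℂ] ℂ :=
  Matrix.traceLinearMap (Fin 2) ℂ ℂ ∘ₗ ρ.toLinearMap ∘ₗ LinearMap.mulLeft ℂ gK

/-- The Drinfeld mapping `φ ↦ (φ ⊗ id)(M)`. -/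
def drinfeldImg (β : ℂ) (φ : Q →ₗ[ℂ] ℂ) : Q :=
  (TensorProduct.lid ℂ Q) (TensorProduct.map φ LinearMap.id (Mmat β))

/-!
The PBW monomials span `Q` because their span contains `1` and is stable under left multiplication
by the generators, so the integral property need only be checked on them. The functional `μ` exists
because its values on PBW monomials are weighted averages, over the four characters of `ℂ[K]`, of
matrix entries of the induced modules. Cointegrals can be checked on generators.

For the normalisation of `M`, let `p_a` be the projection onto the eigenvalue `a` of left
multiplication by `K`. The tensor `R * (p_a ⊗ p_b)` involves only one of the sectors `R00`, `R01`,
`R10`, `R11`, selected by `a ^ 2` and `b ^ 2`, and is a combination of six explicit tensors. With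
`κ = μ(E * F * K ^ 3)`, the value of `μ ⊗ μ` on `M * (p_a ⊗ p_b)` is `κ ^ 2 / 4` times `1`, `-a`,
`b` or `β ^ 2 * a * b` in these sectors, so on summing over `a` and `b` every sector but the first
cancels, leaving `κ ^ 2`.
-/

theorem gK_mul_gKi : gK * gKi = 1 := by
  simpa [gK, gKi] using RingQuot.mkAlgHom_rel ℂ QRel.KKi

theorem gKi_mul_gK : gKi * gK = 1 := by
  simpa [gK, gKi] using RingQuot.mkAlgHom_rel ℂ QRel.KiK

theorem gK_pow_four : gK ^ 4 = 1 := by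
  simpa [gK] using RingQuot.mkAlgHom_rel ℂ QRel.K4

theorem gE_mul_gE : gE * gE = 0 := by
  simpa [gE, pow_two] using RingQuot.mkAlgHom_rel ℂ QRel.Esq

theorem gF_mul_gF : gF * gF = 0 := by
  simpa [gF, pow_two] using RingQuot.mkAlgHom_rel ℂ QRel.Fsq

theorem gKi_eq_gK_pow_three : gKi = gK ^ 3 := by
  calc gKi = gK ^ 4 * gKi := by rw [gK_pow_four, one_mul]
    _ = gK ^ 3 := by rw [pow_succ, mul_assoc, gK_mul_gKi, mul_one]

-- The negation in `-(gE * gK)` does not unify with `neg_mul` under `rw`, because `RingQuot`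
-- defines it irreducibly; scalars avoid the problem.
theorem gK_mul_gE : gK * gE = (-1 : ℂ) • (gE * gK) := by
  have h : gK * gE * gKi = (-1 : ℂ) • gE := by
    refine Eq.trans ?_ (neg_one_smul ℂ gE).symm
    simpa [gK, gE, gKi] using RingQuot.mkAlgHom_rel ℂ QRel.KEKi
  calc gK * gE = gK * gE * gKi * gK := by rw [mul_assoc, gKi_mul_gK, mul_one]
    _ = (-1 : ℂ) • (gE * gK) := by rw [h, smul_mul_assoc]

theorem gK_mul_gF : gK * gF = (-1 : ℂ) • (gF * gK) := by
  have h : gK * gF * gKi = (-1 : ℂ) • gF := by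
    refine Eq.trans ?_ (neg_one_smul ℂ gF).symm
    simpa [gK, gF, gKi] using RingQuot.mkAlgHom_rel ℂ QRel.KFKi
  calc gK * gF = gK * gF * gKi * gK := by rw [mul_assoc, gKi_mul_gK, mul_one]
    _ = (-1 : ℂ) • (gF * gK) := by rw [h, smul_mul_assoc]

theorem gF_mul_gE : gF * gE = gE * gF - (2 * Complex.I)⁻¹ • (gK - gK ^ 3) := by
  have h : gE * gF - gF * gE = (2 * Complex.I)⁻¹ • (gK - gKi) := by
    simpa only [gK, gF, gKi, gE, map_sub, map_mul, map_smul] using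
      RingQuot.mkAlgHom_rel ℂ QRel.EF
  rw [← gKi_eq_gK_pow_three, ← h, sub_sub_cancel]

theorem gF_mul_gE_mul_gF : gF * (gE * gF) = gF * ((2 * Complex.I)⁻¹ • (gK - gK ^ 3)) := by
  have h : gF * (gE * gF) = gF * (gE * gF - gF * gE) := by
    rw [mul_sub, ← mul_assoc gF gF, gF_mul_gF, zero_mul, sub_zero]
  rw [h, gF_mul_gE, sub_sub_cancel]

theorem gK_mul_gE_mul_gF : gK * (gE * gF) = gE * gF * gK := by
  rw [← mul_assoc, gK_mul_gE, smul_mul_assoc, mul_assoc, gK_mul_gF, mul_smul_comm, smul_smul,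
    neg_mul_neg, one_mul, one_smul, mul_assoc]

theorem adjoin_gE_gF_gK : Algebra.adjoin ℂ {gE, gF, gK} = ⊤ := by
  rw [eq_top_iff, ← (AlgHom.range_eq_top _).2 (RingQuot.mkAlgHom_surjective ℂ QRel),
    ← Algebra.map_top, ← FreeAlgebra.adjoin_range_ι, AlgHom.map_adjoin, Algebra.adjoin_le_iff]
  have hK : gK ∈ Algebra.adjoin ℂ {gE, gF, gK} := Algebra.subset_adjoin (by simp)
  have hKi : gKi ∈ Algebra.adjoin ℂ {gE, gF, gK} := gKi_eq_gK_pow_three ▸ pow_mem hK 3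
  rintro _ ⟨_, ⟨g, rfl⟩, rfl⟩
  cases g with
  | E => exact Algebra.subset_adjoin (Or.inl rfl)
  | F => exact Algebra.subset_adjoin (Or.inr (Or.inl rfl))
  | K => exact hK
  | Kinv => exact hKi

theorem eq_top_of_one_mem_of_mul_mem {R A : Type*} [CommSemiring R] [Semiring A] [Algebra R A]
    {s : Set A} (hs : Algebra.adjoin R s = ⊤) {W : Submodule R A} (h1 : 1 ∈ W)
    (hmul : ∀ g ∈ s, ∀ w ∈ W, g * w ∈ W) : W = ⊤ := by
  have hmul' (x : A) : ∀ w ∈ W, x * w ∈ W := by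
    have hx : x ∈ Algebra.adjoin R s := hs ▸ Algebra.mem_top
    induction hx using Algebra.adjoin_induction with
    | mem x hx => exact hmul x hx
    | algebraMap r => exact fun w hw ↦ by rw [← Algebra.smul_def]; exact W.smul_mem r hw
    | add x y _ _ hx hy => exact fun w hw ↦ by rw [add_mul]; exact add_mem (hx w hw) (hy w hw)
    | mul x y _ _ hx hy => exact fun w hw ↦ by rw [mul_assoc]; exact hx _ (hy w hw)
  exact eq_top_iff.2 fun x _ ↦ mul_one x ▸ hmul' x 1 h1

/-- The span of the monomials `E ^ m * F ^ n * K ^ l` with `m, n ≤ 1`, written as a product of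
submodules so that its stability under left multiplication need only be checked on
`1`, `E`, `F` and `E * F`. -/
def pbwSpan : Submodule ℂ Q :=
  Submodule.span ℂ {1, gE, gF, gE * gF} * Subalgebra.toSubmodule (Algebra.adjoin ℂ {gK})

theorem mul_mem_pbwSpan {x g : Q} (hx : x ∈ ({1, gE, gF, gE * gF} : Set Q))
    (hg : g ∈ Algebra.adjoin ℂ {gK}) : x * g ∈ pbwSpan :=
  Submodule.mul_mem_mul (Submodule.subset_span hx) hg

theorem mul_mem_pbwSpan_of_forall_generator {g : Q}
    (hg : ∀ x ∈ ({1, gE, gF, gE * gF} : Set Q), g * x ∈ pbwSpan) :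
    ∀ w ∈ pbwSpan, g * w ∈ pbwSpan := by
  intro w hw
  have hspan : Submodule.span ℂ {1, gE, gF, gE * gF} ≤ pbwSpan.comap (LinearMap.mulLeft ℂ g) :=
    Submodule.span_le.2 hg
  induction hw using Submodule.mul_induction_on' with
  | mem_mul_mem x hx k hk =>
    have hgx : g * x ∈ pbwSpan := hspan hx
    have hgxk := Submodule.mul_mem_mul hgx hk
    rwa [pbwSpan, mul_assoc, Subalgebra.isIdempotentElem_toSubmodule, mul_assoc] at hgxk
  | add x _ y _ hx hy => rw [mul_add]; exact add_mem hx hy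

theorem pbwSpan_eq_top : pbwSpan = ⊤ := by
  set A := Algebra.adjoin ℂ {gK}
  have hK : gK ∈ A := Algebra.self_mem_adjoin_singleton ℂ gK
  have hbracket : (2 * Complex.I)⁻¹ • (gK - gK ^ 3) ∈ A :=
    A.smul_mem (sub_mem hK (pow_mem hK 3)) _
  have hone : ∀ g ∈ A, g ∈ pbwSpan := fun g hg ↦ by
    simpa using mul_mem_pbwSpan (x := 1) (by simp) hg
  have hE : ∀ g ∈ A, gE * g ∈ pbwSpan := fun g hg ↦ mul_mem_pbwSpan (by simp) hg
  have hF : ∀ g ∈ A, gF * g ∈ pbwSpan := fun g hg ↦ mul_mem_pbwSpan (by simp) hg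
  have hEF : ∀ g ∈ A, gE * gF * g ∈ pbwSpan := fun g hg ↦ mul_mem_pbwSpan (by simp) hg
  refine eq_top_of_one_mem_of_mul_mem adjoin_gE_gF_gK (hone 1 (one_mem A)) fun g hg ↦
    mul_mem_pbwSpan_of_forall_generator ?_
  rcases hg with rfl | rfl | rfl <;> rintro _ (rfl | rfl | rfl | rfl)
  · exact hE 1 (one_mem A)
  · rw [gE_mul_gE]; exact zero_mem _
  · simpa using hEF 1 (one_mem A)
  · rw [← mul_assoc, gE_mul_gE, zero_mul]; exact zero_mem _
  · exact hF 1 (one_mem A)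
  · rw [gF_mul_gE]; exact sub_mem (by simpa using hEF 1 (one_mem A)) (hone _ hbracket)
  · rw [gF_mul_gF]; exact zero_mem _
  · rw [gF_mul_gE_mul_gF]; exact hF _ hbracket
  · exact hone _ (by simpa using hK)
  · rw [gK_mul_gE]; exact pbwSpan.smul_mem _ (hE _ hK)
  · rw [gK_mul_gF]; exact pbwSpan.smul_mem _ (hF _ hK)
  · rw [gK_mul_gE_mul_gF]; exact hEF _ hK

open scoped Pointwise in
theorem pbw_linearMap_ext {V : Type*} [AddCommMonoid V] [Module ℂ V] {f g : Q →ₗ[ℂ] V}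
    (h : ∀ (m n : Fin 2) (l : Fin 4), f (gE ^ (m : ℕ) * gF ^ (n : ℕ) * gK ^ (l : ℕ)) =
      g (gE ^ (m : ℕ) * gF ^ (n : ℕ) * gK ^ (l : ℕ))) : f = g := by
  have hmonomial (x : Q) (hx : x ∈ ({1, gE, gF, gE * gF} : Set Q)) (l : ℕ) :
      f (x * gK ^ l) = g (x * gK ^ l) := by
    rw [pow_eq_pow_mod l gK_pow_four]
    lift l % 4 to Fin 4 using l.mod_lt (by norm_num) with l
    rcases hx with rfl | rfl | rfl | rfl
    · simpa using h 0 0 l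
    · simpa using h 1 0 l
    · simpa using h 0 1 l
    · simpa using h 1 1 l
  have hspan :
      Submodule.span ℂ (({1, gE, gF, gE * gF} : Set Q) * (Submonoid.powers gK : Set Q)) = ⊤ := by
    rw [← pbwSpan_eq_top, pbwSpan, Algebra.adjoin_eq_span, Submodule.span_mul_span,
      Submonoid.powers_eq_closure]
  refine LinearMap.ext_on hspan ?_
  rintro _ ⟨x, hx, _, ⟨l, rfl⟩, rfl⟩
  exact hmonomial x hx l

/-- `x` is a vector of `K`-weight `a` in the left regular representation. It is reducible so that
`simp` can rewrite with a proof of it. -/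
abbrev IsWeight (a : ℂ) (x : Q) : Prop := gK * x = a • x

/-- The eigenvalue of `[E, F] = (K - K ^ 3) / (2 * i)` on vectors of weight `a`. -/
def bracketEigenvalue (a : ℂ) : ℂ := (2 * Complex.I)⁻¹ * (a - a ^ 3)

/-- The six tensors `E ^ m * F ^ n ⊗ E ^ m' * F ^ n'` with `m, n, m', n' ≤ 1` of total degree
`m + m' - n - n' = 0`, applied to `x ⊗ y` and combined with the coefficients `c`. The `R`-matrix
sends every tensor of weight vectors to such a combination. -/
def degreeZeroTensor (c : Fin 6 → ℂ) (x y : Q) : TP2 ℂ Q :=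
  c 0 • (x ⊗ₜ[ℂ] y) + c 1 • ((gE * (gF * x)) ⊗ₜ[ℂ] y) + c 2 • (x ⊗ₜ[ℂ] (gE * (gF * y))) +
    c 3 • ((gE * (gF * x)) ⊗ₜ[ℂ] (gE * (gF * y))) + c 4 • ((gE * x) ⊗ₜ[ℂ] (gF * y)) +
    c 5 • ((gF * x) ⊗ₜ[ℂ] (gE * y))

/-- The coefficients of the action of `R00` on weights `(a, b)`. -/
def coeffR00 (a b : ℂ) : Fin 6 → ℂ :=
  ![(1 + b + a - a * b) / 2, 0, 0, 0, Complex.I * (1 - b - a - a * b), 0]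

/-- The coefficients of the action of `R01` on weights `(a, b)`. -/
def coeffR01 (a b : ℂ) : Fin 6 → ℂ :=
  let u := (1 - Complex.I * b + a + Complex.I * a * b) / 2
  let v := (1 + Complex.I * b - a + Complex.I * a * b) * (1 - Complex.I) / 2
  ![u, u * (1 + Complex.I) * a, 0, u * (2 * Complex.I * a * b), -v, v * a * b]

/-- The coefficients of the action of `R10` on weights `(a, b)`. -/
def coeffR10 (a b : ℂ) : Fin 6 → ℂ :=
  let u := (1 + b - Complex.I * a + Complex.I * a * b) / 2
  let v := (1 - b + Complex.I * a + Complex.I * a * b) * (1 - Complex.I) / 2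
  ![u * b, 0, -u * (1 - Complex.I), -u * (2 * Complex.I * a), v * b, v * a]

/-- The coefficients of the action of `R11 β` on weights `(a, b)`. -/
def coeffR11 (β a b : ℂ) : Fin 6 → ℂ :=
  let u := β * (1 - Complex.I * b - Complex.I * a + a * b) / 2
  let v := β * (1 + Complex.I * b + Complex.I * a + a * b) / 2
  ![-u * Complex.I * a, -u * (1 + Complex.I), u * (1 - Complex.I) * a * b,
    -u * (2 * Complex.I * b), v * (2 * Complex.I * a), 0]

namespace IsWeight

variable {a b : ℂ} {x y : Q}

theorem gK_pow_mul (hx : IsWeight a x) (n : ℕ) : gK ^ n * x = a ^ n • x := by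
  induction n with
  | zero => simp
  | succ n ih => rw [pow_succ, mul_assoc, hx, mul_smul_comm, ih, smul_smul, pow_succ']

theorem gE_mul (hx : IsWeight a x) : IsWeight (-a) (gE * x) := by
  rw [IsWeight, ← mul_assoc, gK_mul_gE, smul_mul_assoc, mul_assoc, hx, mul_smul_comm, smul_smul,
    neg_one_mul]

theorem gF_mul (hx : IsWeight a x) : IsWeight (-a) (gF * x) := by
  rw [IsWeight, ← mul_assoc, gK_mul_gF, smul_mul_assoc, mul_assoc, hx, mul_smul_comm, smul_smul,
    neg_one_mul]

theorem gF_mul_gE_mul (hx : IsWeight a x) :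
    gF * (gE * x) = gE * (gF * x) - bracketEigenvalue a • x := by
  have hbracket : (gK - gK ^ 3) * x = (a - a ^ 3) • x := by
    rw [sub_mul, hx, hx.gK_pow_mul]
    module
  rw [← mul_assoc, gF_mul_gE, sub_mul, smul_mul_assoc, hbracket, smul_smul, mul_assoc,
    bracketEigenvalue]

theorem e0_mul (hx : IsWeight a x) : e0 * x = ((1 + a ^ 2) / 2) • x := by
  rw [e0, smul_mul_assoc, add_mul, one_mul, hx.gK_pow_mul]
  module

theorem e1_mul (hx : IsWeight a x) : e1 * x = ((1 - a ^ 2) / 2) • x := by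
  rw [e1, smul_mul_assoc, sub_mul, one_mul, hx.gK_pow_mul]
  module

theorem R00_mul (hx : IsWeight a x) (hy : IsWeight b y) :
    R00 * (x ⊗ₜ[ℂ] y) = degreeZeroTensor (coeffR00 a b) x y := by
  simp only [R00, t2, smul_mul_assoc, mul_smul_comm, add_mul, sub_mul, mul_add, mul_sub,
    Algebra.TensorProduct.tmul_mul_tmul, one_mul, mul_one, mul_assoc, hx, hy, hx.gE_mul, hy.gF_mul,
    ← TensorProduct.smul_tmul', TensorProduct.tmul_smul, degreeZeroTensor, coeffR00,
    Matrix.cons_val]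
  module

theorem R01_mul (hx : IsWeight a x) (hy : IsWeight b y) :
    R01 * (x ⊗ₜ[ℂ] y) = degreeZeroTensor (coeffR01 a b) x y := by
  simp only [R01, t2, eFK, eEK, eEFK, smul_mul_assoc, mul_smul_comm, add_mul, sub_mul, mul_add,
    mul_sub, Algebra.TensorProduct.tmul_mul_tmul, one_mul, mul_one, mul_assoc, hx, hy, hx.gE_mul,
    hx.gF_mul, hx.gF_mul.gE_mul, hy.gE_mul, hy.gF_mul, hy.gF_mul.gE_mul, ← TensorProduct.smul_tmul',
    TensorProduct.tmul_smul, degreeZeroTensor, coeffR01, Matrix.cons_val]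
  module

theorem R10_mul (hx : IsWeight a x) (hy : IsWeight b y) :
    R10 * (x ⊗ₜ[ℂ] y) = degreeZeroTensor (coeffR10 a b) x y := by
  simp only [R10, t2, eFK, eEF, eEFK, smul_mul_assoc, mul_smul_comm, add_mul, sub_mul, mul_add,
    mul_sub, Algebra.TensorProduct.tmul_mul_tmul, one_mul, mul_assoc, hx, hy, hx.gE_mul, hx.gF_mul,
    hx.gF_mul.gE_mul, hy.gE_mul, hy.gF_mul, hy.gF_mul.gE_mul, ← TensorProduct.smul_tmul',
    TensorProduct.tmul_smul, degreeZeroTensor, coeffR10, Matrix.cons_val]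
  module

theorem R11_mul (hx : IsWeight a x) (hy : IsWeight b y) (β : ℂ) :
    R11 β * (x ⊗ₜ[ℂ] y) = degreeZeroTensor (coeffR11 β a b) x y := by
  simp only [R11, t2, eEK, eEF, eEFK, smul_mul_assoc, mul_smul_comm, add_mul, sub_mul, mul_add,
    mul_sub, Algebra.TensorProduct.tmul_mul_tmul, one_mul, mul_one, mul_assoc, hx, hy, hx.gE_mul,
    hx.gF_mul.gE_mul, hy.gF_mul, hy.gF_mul.gE_mul, ← TensorProduct.smul_tmul',
    TensorProduct.tmul_smul, degreeZeroTensor, coeffR11, Matrix.cons_val]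
  module

theorem Rmat_mul (hx : IsWeight a x) (hy : IsWeight b y) (β : ℂ) :
    Rmat β * (x ⊗ₜ[ℂ] y) =
      ((1 + a ^ 2) / 2 * ((1 + b ^ 2) / 2)) • (R00 * (x ⊗ₜ[ℂ] y)) +
      ((1 + a ^ 2) / 2 * ((1 - b ^ 2) / 2)) • (R01 * (x ⊗ₜ[ℂ] y)) +
      ((1 - a ^ 2) / 2 * ((1 + b ^ 2) / 2)) • (R10 * (x ⊗ₜ[ℂ] y)) +
      ((1 - a ^ 2) / 2 * ((1 - b ^ 2) / 2)) • (R11 β * (x ⊗ₜ[ℂ] y)) := by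
  simp only [Rmat, t2, add_mul, mul_assoc, Algebra.TensorProduct.tmul_mul_tmul, hx.e0_mul,
    hx.e1_mul, hy.e0_mul, hy.e1_mul, mul_smul_comm, ← TensorProduct.smul_tmul',
    TensorProduct.tmul_smul, smul_smul]
  module

theorem Rmat_mul_of_sq_eq_one_of_sq_eq_one (hx : IsWeight a x) (hy : IsWeight b y)
    (ha : a ^ 2 = 1) (hb : b ^ 2 = 1) (β : ℂ) :
    Rmat β * (x ⊗ₜ[ℂ] y) = degreeZeroTensor (coeffR00 a b) x y := by
  rw [hx.Rmat_mul hy, ha, hb, ← hx.R00_mul hy]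
  module

theorem Rmat_mul_of_sq_eq_one_of_sq_eq_neg_one (hx : IsWeight a x) (hy : IsWeight b y)
    (ha : a ^ 2 = 1) (hb : b ^ 2 = -1) (β : ℂ) :
    Rmat β * (x ⊗ₜ[ℂ] y) = degreeZeroTensor (coeffR01 a b) x y := by
  rw [hx.Rmat_mul hy, ha, hb, ← hx.R01_mul hy]
  module

theorem Rmat_mul_of_sq_eq_neg_one_of_sq_eq_one (hx : IsWeight a x) (hy : IsWeight b y)
    (ha : a ^ 2 = -1) (hb : b ^ 2 = 1) (β : ℂ) :
    Rmat β * (x ⊗ₜ[ℂ] y) = degreeZeroTensor (coeffR10 a b) x y := by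
  rw [hx.Rmat_mul hy, ha, hb, ← hx.R10_mul hy]
  module

theorem Rmat_mul_of_sq_eq_neg_one_of_sq_eq_neg_one (hx : IsWeight a x) (hy : IsWeight b y)
    (ha : a ^ 2 = -1) (hb : b ^ 2 = -1) (β : ℂ) :
    Rmat β * (x ⊗ₜ[ℂ] y) = degreeZeroTensor (coeffR11 β a b) x y := by
  rw [hx.Rmat_mul hy, ha, hb, ← hx.R11_mul hy β]
  module

end IsWeight

/-- The projection onto the weight space of the fourth root of unity `a`. It is normalised as
`(a / 4) * (K ^ 4 - a ^ 4) / (K - a)`, so that no inverse of `a` occurs. -/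
def weightProj (a : ℂ) : Q := (a / 4) • ∑ l ∈ Finset.range 4, a ^ (3 - l) • gK ^ l

theorem weightProj_eq {a : ℂ} (ha : a ^ 4 = 1) :
    weightProj a = (4 : ℂ)⁻¹ • (1 + a ^ 3 • gK + a ^ 2 • gK ^ 2 + a • gK ^ 3) := by
  simp only [weightProj, Finset.sum_range_succ, Finset.sum_range_zero, pow_zero, pow_one]
  linear_combination (norm := module) ((4 : ℂ)⁻¹ * ha) • (1 : Q)

theorem isWeight_weightProj {a : ℂ} (ha : a ^ 4 = 1) : IsWeight a (weightProj a) := by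
  have hK : gK * weightProj a =
      (4 : ℂ)⁻¹ • (gK + a ^ 3 • gK ^ 2 + a ^ 2 • gK ^ 3 + a • gK ^ 4) := by
    simp only [weightProj_eq ha, mul_smul_comm, mul_add, mul_one, ← pow_succ', ← pow_two]
  rw [IsWeight, hK, gK_pow_four, weightProj_eq ha]
  linear_combination (norm := module) (-(4 : ℂ)⁻¹ * ha) • gK

theorem weightProj_mul_gK {a : ℂ} (ha : a ^ 4 = 1) : weightProj a * gK = a • weightProj a := by
  rw [← isWeight_weightProj ha]
  simp only [weightProj, smul_mul_assoc, mul_smul_comm, Finset.mul_sum, Finset.sum_mul,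
    ← pow_succ, ← pow_succ']

theorem weightProj_mul_of_gK_mul {x : Q} (hx : gK * x = (-1 : ℂ) • (x * gK)) (a : ℂ) :
    weightProj a * x = x * weightProj (-a) := by
  have hpow (n : ℕ) : gK ^ n * x = (-1 : ℂ) ^ n • (x * gK ^ n) := by
    induction n with
    | zero => simp
    | succ n ih =>
      rw [pow_succ, mul_assoc, hx, mul_smul_comm, ← mul_assoc, ih, smul_mul_assoc, smul_smul,
        mul_assoc, pow_succ']
  simp only [weightProj, Finset.sum_range_succ, Finset.sum_range_zero, smul_mul_assoc,
    mul_smul_comm, mul_add, add_mul, hpow, mul_zero, zero_mul]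
  module

theorem I_pow_pow_four (k : ℕ) : (Complex.I ^ k) ^ 4 = 1 := by
  rw [← pow_mul, mul_comm, pow_mul, Complex.I_pow_four, one_pow]

theorem sum_weightProj_I_pow : ∑ k ∈ Finset.range 4, weightProj (Complex.I ^ k) = 1 := by
  simp only [weightProj_eq (I_pow_pow_four _), Finset.sum_range_succ, Finset.sum_range_zero]
  match_scalars <;> grind [Complex.I_sq]

theorem cInt_eq (β : ℂ) :
    cInt β = (4 * (β ^ 2 / Complex.I)) • (gE * (gF * weightProj 1)) := by
  simp only [cInt, weightProj_eq (one_pow 4), mul_smul_comm, smul_smul, one_pow, one_smul,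
    mul_assoc]
  congr 1
  ring

theorem mul_eq_smul_and_mul_eq_smul_of_adjoin_eq_top {R A : Type*} [CommSemiring R] [Semiring A]
    [Algebra R A] {s : Set A} (hs : Algebra.adjoin R s = ⊤) (ε : A →ₐ[R] R) {c : A}
    (hc : ∀ g ∈ s, g * c = ε g • c ∧ c * g = ε g • c) (x : A) :
    x * c = ε x • c ∧ c * x = ε x • c := by
  have hx : x ∈ Algebra.adjoin R s := hs ▸ Algebra.mem_top
  induction hx using Algebra.adjoin_induction with
  | mem x hx => exact hc x hx
  | algebraMap r => simp [← Algebra.smul_def, ← Algebra.commutes]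
  | add x y _ _ hx hy => simp only [add_mul, mul_add, hx, hy, map_add, add_smul, and_self]
  | mul x y _ _ hx hy =>
    constructor
    · rw [mul_assoc, hy.1, mul_smul_comm, hx.1, smul_smul, map_mul, mul_comm]
    · rw [← mul_assoc, hx.2, smul_mul_assoc, hy.2, smul_smul, map_mul]

theorem cInt_isTwoSidedCointegral (ce : Q →ₐ[ℂ] ℂ) (hceE : ce gE = 0) (hceF : ce gF = 0)
    (hceK : ce gK = 1) (β : ℂ) (x : Q) :
    x * cInt β = ce x • cInt β ∧ cInt β * x = ce x • cInt β := by
  have hp := isWeight_weightProj (a := 1) (by norm_num)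
  have hp' := isWeight_weightProj (a := -1) (by norm_num)
  refine mul_eq_smul_and_mul_eq_smul_of_adjoin_eq_top adjoin_gE_gF_gK ce ?_ x
  rw [cInt_eq]
  rintro _ (rfl | rfl | rfl)
  · constructor
    · rw [mul_smul_comm, ← mul_assoc, gE_mul_gE, zero_mul, hceE, smul_zero, zero_smul]
    · rw [smul_mul_assoc, mul_assoc, mul_assoc, weightProj_mul_of_gK_mul gK_mul_gE,
        hp'.gF_mul_gE_mul, mul_sub, ← mul_assoc gE, gE_mul_gE]
      norm_num [hceE, bracketEigenvalue]
  · constructor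
    · rw [mul_smul_comm, hp.gF_mul.gF_mul_gE_mul, ← mul_assoc gF, gF_mul_gF]
      norm_num [hceF, bracketEigenvalue]
    · rw [smul_mul_assoc, mul_assoc, mul_assoc, weightProj_mul_of_gK_mul gK_mul_gF,
        ← mul_assoc gF, gF_mul_gF, zero_mul, mul_zero, hceF, smul_zero, zero_smul]
  · constructor
    · rw [mul_smul_comm, hp.gF_mul.gE_mul, neg_neg, one_smul, hceK, one_smul]
    · rw [smul_mul_assoc, mul_assoc, mul_assoc, weightProj_mul_gK (by norm_num), one_smul, hceK,
        one_smul]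

/-- The functional `μ` reads off `κ` times the coefficient of the top monomial `E * F * K ^ 3`
in the PBW basis. -/
def IsTopCoefficient (κ : ℂ) (μ : Q →ₗ[ℂ] ℂ) : Prop :=
  ∀ (m n : Fin 2) (l : Fin 4), μ (gE ^ (m : ℕ) * gF ^ (n : ℕ) * gK ^ (l : ℕ)) =
    if m = 1 ∧ n = 1 ∧ l = 3 then κ else 0

namespace IsTopCoefficient

variable {κ : ℂ} {μ : Q →ₗ[ℂ] ℂ}

theorem apply_gK_pow (hμ : IsTopCoefficient κ μ) (l : ℕ) : μ (gK ^ l) = 0 := by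
  rw [pow_eq_pow_mod l gK_pow_four]
  lift l % 4 to Fin 4 using l.mod_lt (by norm_num) with l
  simpa using hμ 0 0 l

theorem apply_gE_mul_gK_pow (hμ : IsTopCoefficient κ μ) (l : ℕ) : μ (gE * gK ^ l) = 0 := by
  rw [pow_eq_pow_mod l gK_pow_four]
  lift l % 4 to Fin 4 using l.mod_lt (by norm_num) with l
  simpa using hμ 1 0 l

theorem apply_gF_mul_gK_pow (hμ : IsTopCoefficient κ μ) (l : ℕ) : μ (gF * gK ^ l) = 0 := by
  rw [pow_eq_pow_mod l gK_pow_four]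
  lift l % 4 to Fin 4 using l.mod_lt (by norm_num) with l
  simpa using hμ 0 1 l

theorem apply_gE_mul_gF_mul_gK_pow (hμ : IsTopCoefficient κ μ) (l : ℕ) :
    μ (gE * (gF * gK ^ l)) = if l % 4 = 3 then κ else 0 := by
  rw [pow_eq_pow_mod l gK_pow_four]
  lift l % 4 to Fin 4 using l.mod_lt (by norm_num) with l
  simpa [Fin.ext_iff, mul_assoc] using hμ 1 1 l

theorem apply_weightProj (hμ : IsTopCoefficient κ μ) (a : ℂ) : μ (weightProj a) = 0 := by
  simp [weightProj, hμ.apply_gK_pow]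

theorem apply_gE_mul_weightProj (hμ : IsTopCoefficient κ μ) (a : ℂ) :
    μ (gE * weightProj a) = 0 := by
  simp [weightProj, Finset.mul_sum, hμ.apply_gE_mul_gK_pow]

theorem apply_gF_mul_weightProj (hμ : IsTopCoefficient κ μ) (a : ℂ) :
    μ (gF * weightProj a) = 0 := by
  simp [weightProj, Finset.mul_sum, hμ.apply_gF_mul_gK_pow]

theorem apply_gE_mul_gF_mul_weightProj (hμ : IsTopCoefficient κ μ) (a : ℂ) :
    μ (gE * (gF * weightProj a)) = κ * a / 4 := by
  simp only [weightProj, mul_smul_comm, Finset.mul_sum, map_smul, map_sum,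
    hμ.apply_gE_mul_gF_mul_gK_pow]
  simp only [Finset.sum_range_succ, Finset.sum_range_zero, Nat.reduceMod, Nat.reduceEqDiff,
    OfNat.zero_ne_ofNat, OfNat.one_ne_ofNat, reduceIte, smul_eq_mul]
  ring

theorem isRightIntegral (hμ : IsTopCoefficient κ μ) {Δ : Q →ₐ[ℂ] TP2 ℂ Q}
    (hΔE : Δ gE = (1 : Q) ⊗ₜ[ℂ] gE + gE ⊗ₜ[ℂ] gK)
    (hΔF : Δ gF = gKi ⊗ₜ[ℂ] gF + gF ⊗ₜ[ℂ] (1 : Q)) (hΔK : Δ gK = gK ⊗ₜ[ℂ] gK) (x : Q) :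
    (TensorProduct.lid ℂ Q) (TensorProduct.map μ LinearMap.id (Δ x)) = μ x • 1 := by
  suffices (TensorProduct.lid ℂ Q).toLinearMap ∘ₗ TensorProduct.map μ LinearMap.id ∘ₗ
      Δ.toLinearMap = μ.smulRight (1 : Q) from LinearMap.congr_fun this x
  refine pbw_linearMap_ext fun m n l ↦ ?_
  have hΔKl : Δ (gK ^ (l : ℕ)) = (gK ^ (l : ℕ)) ⊗ₜ[ℂ] (gK ^ (l : ℕ)) := by
    rw [map_pow, hΔK, Algebra.TensorProduct.tmul_pow]
  have hEF : μ (gE * (gF * gK ^ (l : ℕ))) • (gK * gK ^ (l : ℕ)) =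
      μ (gE * (gF * gK ^ (l : ℕ))) • (1 : Q) := by
    rw [hμ.apply_gE_mul_gF_mul_gK_pow]
    split_ifs with hl
    · rw [← pow_succ', pow_eq_pow_mod _ gK_pow_four, Nat.add_mod, hl, pow_zero]
    · rw [zero_smul, zero_smul]
  fin_cases m <;> fin_cases n
  · simp [hΔKl, hμ.apply_gK_pow]
  · simp [hΔKl, hΔF, add_mul, gKi_eq_gK_pow_three, ← pow_add, hμ.apply_gK_pow,
      hμ.apply_gF_mul_gK_pow]
  · simp [hΔKl, hΔE, add_mul, hμ.apply_gK_pow, hμ.apply_gE_mul_gK_pow]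
  · simpa [hΔKl, hΔE, hΔF, add_mul, mul_add, mul_assoc, gKi_eq_gK_pow_three, ← pow_add,
      hμ.apply_gK_pow, hμ.apply_gE_mul_gK_pow, hμ.apply_gF_mul_gK_pow] using hEF

theorem apply_cInt {β : ℂ} (hβ : β ^ 4 = -1) (hμ : IsTopCoefficient (β ^ 2 / Complex.I) μ) :
    μ (cInt β) = 1 := by
  rw [cInt_eq, map_smul, hμ.apply_gE_mul_gF_mul_weightProj, smul_eq_mul]
  calc _ = β ^ 4 / Complex.I ^ 2 := by ring
    _ = 1 := by rw [hβ, Complex.I_sq, neg_div_neg_eq, div_one]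

end IsTopCoefficient

theorem bracketEigenvalue_of_sq_eq_one {a : ℂ} (ha : a ^ 2 = 1) : bracketEigenvalue a = 0 := by
  rw [bracketEigenvalue, pow_succ, ha, one_mul, sub_self, mul_zero]

theorem bracketEigenvalue_of_sq_eq_neg_one {a : ℂ} (ha : a ^ 2 = -1) :
    bracketEigenvalue a = -Complex.I * a := by
  rw [bracketEigenvalue, pow_succ, ha, mul_inv, Complex.inv_I]
  ring

/-- The functional `μ ⊗ μ` on `Q ⊗ Q`. -/
def tensorSq (μ : Q →ₗ[ℂ] ℂ) : TP2 ℂ Q →ₗ[ℂ] ℂ :=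
  (TensorProduct.lid ℂ ℂ).toLinearMap ∘ₗ TensorProduct.map μ μ

theorem tensorSq_tmul (μ : Q →ₗ[ℂ] ℂ) (x y : Q) : tensorSq μ (x ⊗ₜ[ℂ] y) = μ x * μ y := rfl

theorem flipA_mul (s t : TP2 ℂ Q) : flipA ℂ Q (s * t) = flipA ℂ Q s * flipA ℂ Q t :=
  map_mul (Algebra.TensorProduct.comm ℂ Q Q) s t

theorem flipA_tmul (x y : Q) : flipA ℂ Q (x ⊗ₜ[ℂ] y) = y ⊗ₜ[ℂ] x := rfl

theorem flipA_flipA (t : TP2 ℂ Q) : flipA ℂ Q (flipA ℂ Q t) = t := TensorProduct.comm_comm ..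

theorem tensorSq_flipA (μ : Q →ₗ[ℂ] ℂ) (t : TP2 ℂ Q) :
    tensorSq μ (flipA ℂ Q t) = tensorSq μ t := by
  induction t using TensorProduct.induction_on with
  | zero => rw [map_zero]
  | tmul x y => rw [flipA_tmul, tensorSq_tmul, tensorSq_tmul, mul_comm]
  | add s t hs ht => rw [map_add, map_add, map_add, hs, ht]

theorem tensorSq_mul_of_eq_flipA_mul (μ : Q →ₗ[ℂ] ℂ) {M s : TP2 ℂ Q} (hM : M = flipA ℂ Q s * s)
    (t : TP2 ℂ Q) : tensorSq μ (M * t) = tensorSq μ (s * flipA ℂ Q (s * t)) := by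
  rw [hM, ← tensorSq_flipA, mul_assoc, flipA_mul, flipA_flipA]

theorem tensorSq_Mmat_mul (μ : Q →ₗ[ℂ] ℂ) (β : ℂ) (t : TP2 ℂ Q) :
    tensorSq μ (Mmat β * t) = tensorSq μ (Rmat β * flipA ℂ Q (Rmat β * t)) :=
  -- Instantiating a lemma about abstract tensors keeps the kernel from unfolding `Rmat β`.
  tensorSq_mul_of_eq_flipA_mul μ (M := Mmat β) (s := Rmat β) rfl t

theorem sum_mul_weightProj_tmul_weightProj (t : TP2 ℂ Q) :
    ∑ j ∈ Finset.range 4, ∑ k ∈ Finset.range 4,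
      t * (weightProj (Complex.I ^ j) ⊗ₜ[ℂ] weightProj (Complex.I ^ k)) = t := by
  simp only [← Finset.mul_sum, ← TensorProduct.tmul_sum, ← TensorProduct.sum_tmul,
    sum_weightProj_I_pow, ← Algebra.TensorProduct.one_def, mul_one]

namespace IsTopCoefficient

variable {κ a b : ℂ} {μ : Q →ₗ[ℂ] ℂ}

theorem tensorSq_mul_flipA_degreeZeroTensor (hμ : IsTopCoefficient κ μ) (ha : a ^ 4 = 1)
    (hb : b ^ 4 = 1) {c c' c'' : Fin 6 → ℂ} {T : TP2 ℂ Q}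
    (hT : ∀ u v, IsWeight b u → IsWeight a v → T * (u ⊗ₜ[ℂ] v) = degreeZeroTensor c' u v)
    (hT' : ∀ u v, IsWeight (-b) u → IsWeight (-a) v →
      T * (u ⊗ₜ[ℂ] v) = degreeZeroTensor c'' u v) :
    tensorSq μ (T * flipA ℂ Q (degreeZeroTensor c (weightProj a) (weightProj b))) =
      κ ^ 2 * a * b / 16 *
        (c 0 * c' 3 + c 1 * (c' 1 + bracketEigenvalue a * c' 3) +
          c 2 * (c' 2 + bracketEigenvalue b * c' 3) +
          c 3 * (c' 0 + bracketEigenvalue b * c' 1 + bracketEigenvalue a * c' 2 +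
            bracketEigenvalue a * bracketEigenvalue b * c' 3) +
          c 4 * c'' 4 + c 5 * c'' 5) := by
  have hx := isWeight_weightProj ha
  have hy := isWeight_weightProj hb
  have hEE (z : Q) : gE * (gE * z) = 0 := by rw [← mul_assoc, gE_mul_gE, zero_mul]
  have hFF (z : Q) : gF * (gF * z) = 0 := by rw [← mul_assoc, gF_mul_gF, zero_mul]
  have hEFx := hx.gF_mul.gE_mul
  have hEFy := hy.gF_mul.gE_mul
  have hneg (z : ℂ) : bracketEigenvalue (-z) = -bracketEigenvalue z := by
    simp only [bracketEigenvalue]; ring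
  rw [neg_neg] at hEFx hEFy
  rw [degreeZeroTensor]
  simp only [map_add, map_smul, flipA_tmul, mul_add, mul_smul_comm, hT _ _ hy hx, hT _ _ hy hEFx,
    hT _ _ hEFy hx, hT _ _ hEFy hEFx, hT' _ _ hy.gF_mul hx.gE_mul, hT' _ _ hy.gE_mul hx.gF_mul]
  simp only [degreeZeroTensor, map_add, map_smul, tensorSq_tmul, hEE, hFF, hx.gF_mul_gE_mul,
    hy.gF_mul_gE_mul, hx.gF_mul.gF_mul_gE_mul, hy.gF_mul.gF_mul_gE_mul, mul_sub, mul_zero,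
    map_sub, map_zero, mul_smul_comm,
    hμ.apply_weightProj, hμ.apply_gE_mul_weightProj, hμ.apply_gF_mul_weightProj,
    hμ.apply_gE_mul_gF_mul_weightProj, smul_eq_mul, hneg]
  ring

theorem tensorSq_Mmat_mul_of_sq_eq_one_of_sq_eq_one (hμ : IsTopCoefficient κ μ)
    (ha : a ^ 2 = 1) (hb : b ^ 2 = 1) (β : ℂ) :
    tensorSq μ (Mmat β * (weightProj a ⊗ₜ[ℂ] weightProj b)) = κ ^ 2 / 4 := by
  have ha' : a ^ 4 = 1 := by linear_combination (a ^ 2 + 1) * ha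
  have hb' : b ^ 4 = 1 := by linear_combination (b ^ 2 + 1) * hb
  rw [tensorSq_Mmat_mul, (isWeight_weightProj ha').Rmat_mul_of_sq_eq_one_of_sq_eq_one
    (isWeight_weightProj hb') ha hb, hμ.tensorSq_mul_flipA_degreeZeroTensor ha' hb'
    (fun _ _ hu hv ↦ hu.Rmat_mul_of_sq_eq_one_of_sq_eq_one hv hb ha β)
    (fun _ _ hu hv ↦ hu.Rmat_mul_of_sq_eq_one_of_sq_eq_one hv
      (by rwa [neg_sq]) (by rwa [neg_sq]) β)]
  simp only [coeffR00, bracketEigenvalue_of_sq_eq_one ha,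
    bracketEigenvalue_of_sq_eq_one hb, Matrix.cons_val]
  grind [Complex.I_sq]

theorem tensorSq_Mmat_mul_of_sq_eq_one_of_sq_eq_neg_one (hμ : IsTopCoefficient κ μ)
    (ha : a ^ 2 = 1) (hb : b ^ 2 = -1) (β : ℂ) :
    tensorSq μ (Mmat β * (weightProj a ⊗ₜ[ℂ] weightProj b)) = -κ ^ 2 * a / 4 := by
  have ha' : a ^ 4 = 1 := by linear_combination (a ^ 2 + 1) * ha
  have hb' : b ^ 4 = 1 := by linear_combination (b ^ 2 - 1) * hb
  rw [tensorSq_Mmat_mul, (isWeight_weightProj ha').Rmat_mul_of_sq_eq_one_of_sq_eq_neg_one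
    (isWeight_weightProj hb') ha hb, hμ.tensorSq_mul_flipA_degreeZeroTensor ha' hb'
    (fun _ _ hu hv ↦ hu.Rmat_mul_of_sq_eq_neg_one_of_sq_eq_one hv hb ha β)
    (fun _ _ hu hv ↦ hu.Rmat_mul_of_sq_eq_neg_one_of_sq_eq_one hv
      (by rwa [neg_sq]) (by rwa [neg_sq]) β)]
  simp only [coeffR01, coeffR10, bracketEigenvalue_of_sq_eq_one ha,
    bracketEigenvalue_of_sq_eq_neg_one hb, Matrix.cons_val]
  grind [Complex.I_sq]

theorem tensorSq_Mmat_mul_of_sq_eq_neg_one_of_sq_eq_one (hμ : IsTopCoefficient κ μ)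
    (ha : a ^ 2 = -1) (hb : b ^ 2 = 1) (β : ℂ) :
    tensorSq μ (Mmat β * (weightProj a ⊗ₜ[ℂ] weightProj b)) = κ ^ 2 * b / 4 := by
  have ha' : a ^ 4 = 1 := by linear_combination (a ^ 2 - 1) * ha
  have hb' : b ^ 4 = 1 := by linear_combination (b ^ 2 + 1) * hb
  rw [tensorSq_Mmat_mul, (isWeight_weightProj ha').Rmat_mul_of_sq_eq_neg_one_of_sq_eq_one
    (isWeight_weightProj hb') ha hb, hμ.tensorSq_mul_flipA_degreeZeroTensor ha' hb'
    (fun _ _ hu hv ↦ hu.Rmat_mul_of_sq_eq_one_of_sq_eq_neg_one hv hb ha β)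
    (fun _ _ hu hv ↦ hu.Rmat_mul_of_sq_eq_one_of_sq_eq_neg_one hv
      (by rwa [neg_sq]) (by rwa [neg_sq]) β)]
  simp only [coeffR10, coeffR01, bracketEigenvalue_of_sq_eq_neg_one ha,
    bracketEigenvalue_of_sq_eq_one hb, Matrix.cons_val]
  grind [Complex.I_sq]

theorem tensorSq_Mmat_mul_of_sq_eq_neg_one_of_sq_eq_neg_one (hμ : IsTopCoefficient κ μ)
    (ha : a ^ 2 = -1) (hb : b ^ 2 = -1) (β : ℂ) :
    tensorSq μ (Mmat β * (weightProj a ⊗ₜ[ℂ] weightProj b)) = κ ^ 2 * β ^ 2 * a * b / 4 := by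
  have ha' : a ^ 4 = 1 := by linear_combination (a ^ 2 - 1) * ha
  have hb' : b ^ 4 = 1 := by linear_combination (b ^ 2 - 1) * hb
  rw [tensorSq_Mmat_mul, (isWeight_weightProj ha').Rmat_mul_of_sq_eq_neg_one_of_sq_eq_neg_one
    (isWeight_weightProj hb') ha hb, hμ.tensorSq_mul_flipA_degreeZeroTensor ha' hb'
    (fun _ _ hu hv ↦ hu.Rmat_mul_of_sq_eq_neg_one_of_sq_eq_neg_one hv hb ha β)
    (fun _ _ hu hv ↦ hu.Rmat_mul_of_sq_eq_neg_one_of_sq_eq_neg_one hv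
      (by rwa [neg_sq]) (by rwa [neg_sq]) β)]
  simp only [coeffR11, bracketEigenvalue_of_sq_eq_neg_one ha,
    bracketEigenvalue_of_sq_eq_neg_one hb, Matrix.cons_val]
  grind [Complex.I_sq]

theorem tensorSq_Mmat (hμ : IsTopCoefficient κ μ) (β : ℂ) : tensorSq μ (Mmat β) = κ ^ 2 := by
  have h0 : (Complex.I ^ 0) ^ 2 = 1 := by rw [pow_zero, one_pow]
  have h1 : (Complex.I ^ 1) ^ 2 = -1 := by rw [pow_one, Complex.I_sq]
  have h2 : (Complex.I ^ 2) ^ 2 = 1 := by rw [Complex.I_sq, neg_one_sq]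
  have h3 : (Complex.I ^ 3) ^ 2 = -1 := by rw [Complex.I_pow_three, neg_sq, Complex.I_sq]
  rw [← sum_mul_weightProj_tmul_weightProj (Mmat β)]
  simp only [Finset.sum_range_succ, Finset.sum_range_zero, zero_add, map_add, h0, h1, h2, h3,
    hμ.tensorSq_Mmat_mul_of_sq_eq_one_of_sq_eq_one,
    hμ.tensorSq_Mmat_mul_of_sq_eq_one_of_sq_eq_neg_one,
    hμ.tensorSq_Mmat_mul_of_sq_eq_neg_one_of_sq_eq_one,
    hμ.tensorSq_Mmat_mul_of_sq_eq_neg_one_of_sq_eq_neg_one]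
  grind [Complex.I_sq]

end IsTopCoefficient

theorem fin_two_diagonal_pow {R : Type*} [Semiring R] (x y : R) (n : ℕ) :
    !![x, 0; 0, y] ^ n = !![x ^ n, 0; 0, y ^ n] := by
  rw [← Matrix.diagonal_vec2, ← Matrix.diagonal_vec2, Matrix.diagonal_pow]
  congr 1
  ext i
  fin_cases i <;> rfl

theorem sum_I_pow_mul_I_pow_pow (l : Fin 4) :
    ∑ k ∈ Finset.range 4, Complex.I ^ k * (Complex.I ^ k) ^ (l : ℕ) = if l = 3 then 4 else 0 := by
  fin_cases l <;> grind [Finset.sum_range_succ, Finset.sum_range_zero, Complex.I_sq]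

section InducedRep

variable {B : Type*} [Ring B] [Algebra ℂ B] {κ f : B}

/-- The images of the generators of `Q` in the module induced from a module over the subalgebra
generated by `F` and `K`, on which these act by `f` and `κ`. Matrices are written in the basis
`1, E`, so the corner entry for `F` comes from `F * E = E * F - [E, F]`. -/
def inducedMatrix (κ f : B) : QGen → Matrix (Fin 2) (Fin 2) B
  | .E => !![0, 0; 1, 0]
  | .F => !![f, -((2 * Complex.I)⁻¹ • (κ - κ ^ 3)); 0, f]
  | .K => !![κ, 0; 0, -κ]
  | .Kinv => !![κ ^ 3, 0; 0, -κ ^ 3]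

theorem lift_inducedMatrix_eq (hκ : κ ^ 4 = 1) (hf : f * f = 0) (hκf : κ * f = -(f * κ))
    {x y : FA} (hxy : QRel x y) :
    FreeAlgebra.lift ℂ (inducedMatrix κ f) x = FreeAlgebra.lift ℂ (inducedMatrix κ f) y := by
  have hκl : κ ^ 3 * κ = 1 := by rw [← pow_succ, hκ]
  have hκr : κ * κ ^ 3 = 1 := by rw [← pow_succ', hκ]
  have hκκ : κ * κ * κ * κ = 1 := by simpa only [pow_succ, pow_zero, one_mul] using hκ
  have hκf' : κ ^ 3 * f = -(f * κ ^ 3) := by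
    have hκκf : κ * (κ * f) = f * (κ * κ) := by
      rw [hκf, mul_neg, ← mul_assoc, hκf, neg_mul, neg_neg, mul_assoc]
    rw [pow_succ, pow_two, mul_assoc, hκf, mul_neg, ← mul_assoc, mul_assoc κ, hκκf, mul_assoc]
  have hhf : (κ - κ ^ 3) * f = -(f * (κ - κ ^ 3)) := by
    rw [sub_mul, hκf, hκf', mul_sub, neg_sub_neg, neg_sub]
  have hκh : κ * (κ - κ ^ 3) * κ ^ 3 = κ - κ ^ 3 := by
    rw [mul_sub, ← pow_succ', hκ, sub_mul, one_mul, mul_assoc, hκr, mul_one]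
  have hκfκ : κ * f * κ ^ 3 = -f := by rw [hκf, neg_mul, mul_assoc, hκr, mul_one]
  cases hxy <;>
    simp only [ιE, ιF, ιK, ιKi, map_mul, map_neg, map_sub, map_one, map_pow, map_smul, map_zero,
      FreeAlgebra.lift_ι_apply, inducedMatrix, pow_succ (_ : Matrix (Fin 2) (Fin 2) B), pow_zero,
      one_mul, Matrix.mul_fin_two, ← Matrix.ext_iff, Fin.forall_fin_two, Matrix.smul_apply,
      Matrix.sub_apply, Matrix.neg_apply]
  case Esq => simp
  case Fsq => simp [hf, hhf]
  case EF => simp [smul_sub, neg_add_eq_sub]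
  case KEKi => simp [hκr]
  case KFKi => simp [hκfκ, hκh]
  case K4 => simp [hκκ]
  case KKi => simp [hκr]
  case KiK => simp [hκl]

/-- The module over `Q` induced from a module over the subalgebra generated by `F` and `K`. -/
def inducedRep (hκ : κ ^ 4 = 1) (hf : f * f = 0) (hκf : κ * f = -(f * κ)) :
    Q →ₐ[ℂ] Matrix (Fin 2) (Fin 2) B :=
  RingQuot.liftAlgHom ℂ
    ⟨FreeAlgebra.lift ℂ (inducedMatrix κ f), fun _ _ ↦ lift_inducedMatrix_eq hκ hf hκf⟩

variable (hκ : κ ^ 4 = 1) (hf : f * f = 0) (hκf : κ * f = -(f * κ))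

theorem inducedRep_gE : inducedRep hκ hf hκf gE = !![0, 0; 1, 0] :=
  (RingQuot.liftAlgHom_mkAlgHom_apply ..).trans (FreeAlgebra.lift_ι_apply ..)

theorem inducedRep_gF :
    inducedRep hκ hf hκf gF = !![f, -((2 * Complex.I)⁻¹ • (κ - κ ^ 3)); 0, f] :=
  (RingQuot.liftAlgHom_mkAlgHom_apply ..).trans (FreeAlgebra.lift_ι_apply ..)

theorem inducedRep_gK : inducedRep hκ hf hκf gK = !![κ, 0; 0, -κ] :=
  (RingQuot.liftAlgHom_mkAlgHom_apply ..).trans (FreeAlgebra.lift_ι_apply ..)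

theorem inducedRep_pbw_apply_one_zero (m n : Fin 2) (l : ℕ) :
    inducedRep hκ hf hκf (gE ^ (m : ℕ) * gF ^ (n : ℕ) * gK ^ l) 1 0 =
      if m = 1 then f ^ (n : ℕ) * κ ^ l else 0 := by
  rw [map_mul, map_mul, map_pow, map_pow, map_pow, inducedRep_gE, inducedRep_gF, inducedRep_gK,
    fin_two_diagonal_pow]
  fin_cases m <;> fin_cases n <;> simp

end InducedRep

/-- The `Q`-module induced from the character `K ↦ a` of the subalgebra generated by `K`. -/
def inducedCharRep {a : ℂ} (ha : a ^ 4 = 1) :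
    Q →ₐ[ℂ] Matrix (Fin 2) (Fin 2) (Matrix (Fin 2) (Fin 2) ℂ) :=
  inducedRep (κ := !![a, 0; 0, -a]) (f := !![0, 0; 1, 0])
    (by rw [fin_two_diagonal_pow, Even.neg_pow (by decide), ha, Matrix.one_fin_two])
    (by simp [← Matrix.ext_iff, Fin.forall_fin_two]) (by simp)

theorem inducedCharRep_pbw_apply_one_zero {a : ℂ} (ha : a ^ 4 = 1) (m n : Fin 2) (l : ℕ) :
    inducedCharRep ha (gE ^ (m : ℕ) * gF ^ (n : ℕ) * gK ^ l) 1 0 1 0 =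
      if m = 1 ∧ n = 1 then a ^ l else 0 := by
  rw [inducedCharRep, inducedRep_pbw_apply_one_zero, fin_two_diagonal_pow]
  fin_cases m <;> fin_cases n <;> simp

theorem exists_isTopCoefficient (κ : ℂ) : ∃ μ, IsTopCoefficient κ μ := by
  let entry : Matrix (Fin 2) (Fin 2) (Matrix (Fin 2) (Fin 2) ℂ) →ₗ[ℂ] ℂ :=
    Matrix.entryLinearMap ℂ ℂ 1 0 ∘ₗ Matrix.entryLinearMap ℂ _ 1 0
  refine ⟨(κ / 4) • ∑ k ∈ Finset.range 4,
    Complex.I ^ k • (entry ∘ₗ (inducedCharRep (I_pow_pow_four k)).toLinearMap), fun m n l ↦ ?_⟩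
  have hentry (k : ℕ) :
      entry (inducedCharRep (I_pow_pow_four k) (gE ^ (m : ℕ) * gF ^ (n : ℕ) * gK ^ (l : ℕ))) =
        if m = 1 ∧ n = 1 then (Complex.I ^ k) ^ (l : ℕ) else 0 :=
    inducedCharRep_pbw_apply_one_zero (I_pow_pow_four k) m n l
  simp only [LinearMap.smul_apply, LinearMap.sum_apply, LinearMap.comp_apply,
    AlgHom.toLinearMap_apply, hentry, smul_eq_mul, mul_ite, mul_zero]
  by_cases hmn : m = 1 ∧ n = 1
  · simp [hmn, sum_I_pow_mul_I_pow_pow]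
  · simp [hmn, ← and_assoc]

/-- the functional `μ` with `μ(E^m F^n K^l) = (β²/i)·δ_{m,1}δ_{n,1}δ_{l,3}`
is a right integral, `c = (β²/i)·EF(1+K+K²+K³)` is a two-sided cointegral, and the
normalisations `(μ⊗μ)(M) = 1` and `μ(c) = 1` hold. -/
theorem statement16 (β : ℂ) (hβ : β ^ 4 = -1)
    (Δ : Q →ₐ[ℂ] TP2 ℂ Q)
    (hΔE : Δ gE = (1:Q) ⊗ₜ[ℂ] gE + gE ⊗ₜ[ℂ] gK)
    (hΔF : Δ gF = gKi ⊗ₜ[ℂ] gF + gF ⊗ₜ[ℂ] (1:Q))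
    (hΔK : Δ gK = gK ⊗ₜ[ℂ] gK)
    (ce : Q →ₐ[ℂ] ℂ) (hceE : ce gE = 0) (hceF : ce gF = 0) (hceK : ce gK = 1) :
    (∃ μ : Q →ₗ[ℂ] ℂ, ∀ (m n : Fin 2) (l : Fin 4),
      μ (gE ^ (m : ℕ) * gF ^ (n : ℕ) * gK ^ (l : ℕ)) =
        if m = 1 ∧ n = 1 ∧ l = 3 then β ^ 2 / Complex.I else 0) ∧
    ∀ μ : Q →ₗ[ℂ] ℂ,
      (∀ (m n : Fin 2) (l : Fin 4),
        μ (gE ^ (m : ℕ) * gF ^ (n : ℕ) * gK ^ (l : ℕ)) =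
          if m = 1 ∧ n = 1 ∧ l = 3 then β ^ 2 / Complex.I else 0) →
      (∀ x : Q, (TensorProduct.lid ℂ Q) (TensorProduct.map μ LinearMap.id (Δ x)) = μ x • 1) ∧
      (∀ x : Q, x * cInt β = ce x • cInt β ∧ cInt β * x = ce x • cInt β) ∧
      (TensorProduct.lid ℂ ℂ) (TensorProduct.map μ μ (Mmat β)) = 1 ∧
      μ (cInt β) = 1 := by
  refine ⟨exists_isTopCoefficient _, fun μ hμ ↦ ?_⟩
  have hμ : IsTopCoefficient (β ^ 2 / Complex.I) μ := hμ
  have hκ : (β ^ 2 / Complex.I) ^ 2 = 1 := by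
    rw [div_pow, ← pow_mul, hβ, Complex.I_sq, div_self (by norm_num)]
  exact ⟨hμ.isRightIntegral hΔE hΔF hΔK, cInt_isTwoSidedCointegral ce hceE hceF hceK β,
    (hμ.tensorSq_Mmat β).trans hκ, hμ.apply_cInt hβ⟩
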